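/- Let f ∈ C(𝕋) and h > 0. Then (2/5)·K₂(f, h/(4√3)) ≤ W₂*(f, χ_h) ≤ 2·K₂(f, h/(4√3)). -/

import Mathlib

/-!
Both inequalities rest on the Taylor kernel of the averaging operator `A_u f = f * χ_u`: for `g` of
class `C²`, `A_u g - g = g'' * φ_u`, where `φ_u(x) = (u/2 - |x|)² / (2u)` on `|x| ≤ u/2` is
nonnegative with integral `u²/24`.

* Upper bound: `‖g - A_u g‖ ≤ (u²/24) ‖g''‖` (`abs_sub_avg_le`) and `‖p - A_u p‖ ≤ 2 ‖p‖`, applied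
  to a competitor `g` and to `p = f - g`; note that `u²/24 ≤ 2 (h/(4√3))²`.

* Lower bound: the competitor is `g = f * (24/h²) φ_h`. As `φ_h'' = χ_h - δ₀`, it is of class `C²`
  and `(h²/24) g'' = A_h f - f`. As `φ_h` is even and decreases away from `0`, the normalized kernel
  is a convex combination of the `χ_{2r}`, `0 < r ≤ h/2`, namely
  `g = (24/h³) ∫₀^{h/2} (h/2 - r) 2r A_{2r} f dr`; hence `‖f - g‖ ≤ W₂*(f, χ_h)`. Altogether
  `K₂(f, h/(4√3)) ≤ (1 + 1/2) W₂*(f, χ_h)`, which is stronger than the constant `5/2` that is needed.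

The competitor is written through iterated primitives of `f` (`steklov`, `steklov_eq`).
-/

open MeasureTheory Real

/-- Uniform (sup) norm of a real function. -/
noncomputable def unorm (f : ℝ → ℝ) : ℝ := ⨆ u : ℝ, |f u|

/-- Convolution of two real functions. -/
noncomputable def conv (f g : ℝ → ℝ) : ℝ → ℝ := fun t => ∫ u : ℝ, f u * g (t - u)

/-- Normalized characteristic function of `(-h/2, h/2)`. -/
noncomputable def chi (h : ℝ) : ℝ → ℝ := fun t => if -h/2 < t ∧ t < h/2 then 1/h else 0

/-- Convolution powers `χ_h^k` (defined for `k ≥ 1`; junk value `0` at `k = 0`). -/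
noncomputable def chiPow (h : ℝ) : ℕ → (ℝ → ℝ)
  | 0 => fun _ => 0
  | 1 => chi h
  | (k+2) => conv (chiPow h (k+1)) (chi h)

/-- Special modulus of continuity `W₂(f, χ_h^k) = ‖f - f*χ_h^k‖`. -/
noncomputable def W2 (f : ℝ → ℝ) (h : ℝ) (k : ℕ) : ℝ :=
  unorm (fun t => f t - conv f (chiPow h k) t)

/-- `W₂*(f, χ_h^k) = sup_{0 < u ≤ h} W₂(f, χ_u^k)`. -/
noncomputable def W2star (f : ℝ → ℝ) (h : ℝ) (k : ℕ) : ℝ :=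
  ⨆ u : Set.Ioc (0:ℝ) h, W2 f u.1 k

/-- Second Peetre K-functional: infimum over twice continuously differentiable
1-periodic functions `g` of `‖f - g‖ + h² ‖D²g‖`. -/
noncomputable def K2 (f : ℝ → ℝ) (h : ℝ) : ℝ :=
  ⨅ g : {g : ℝ → ℝ // ContDiff ℝ 2 g ∧ Function.Periodic g 1},
    unorm (fun t => f t - g.1 t) + h^2 * unorm (iteratedDeriv 2 g.1)

/-- Generalized K-functional `K̃₂(f, h₁, h₂)`. -/
noncomputable def Ktilde2 (f : ℝ → ℝ) (h1 h2 : ℝ) : ℝ :=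
  ⨅ p : {p : (ℝ → ℝ) × (ℝ → ℝ) //
      (ContDiff ℝ 1 p.1 ∧ Function.Periodic p.1 1) ∧
      (ContDiff ℝ 2 p.2 ∧ Function.Periodic p.2 1)},
    unorm (fun t => f t - p.1.1 t) + h1 * unorm (deriv (fun t => p.1.1 t - p.1.2 t))
      + h2^2 * unorm (iteratedDeriv 2 p.1.2)

/-- Classical second modulus of smoothness. -/
noncomputable def omega2 (f : ℝ → ℝ) (h : ℝ) : ℝ :=
  ⨆ u : Set.Ioc (0:ℝ) h, ⨆ t : ℝ, |f (t + u.1) - 2 * f t + f (t - u.1)|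

/-- `τ` is a real 1-periodic trigonometric polynomial of degree at most `n - 1`. -/
def IsTrigPolyDegLT (n : ℕ) (τ : ℝ → ℝ) : Prop :=
  ∃ a b : ℕ → ℝ, ∀ t : ℝ, τ t =
    ∑ j ∈ Finset.range n, (a j * Real.cos (2 * Real.pi * j * t) + b j * Real.sin (2 * Real.pi * j * t))

/-- Best approximation `E_{n-1}(f)` by trigonometric polynomials of degree at most `n-1`. -/
noncomputable def bestApprox (n : ℕ) (f : ℝ → ℝ) : ℝ :=
  ⨅ τ : {τ : ℝ → ℝ // IsTrigPolyDegLT n τ}, unorm (fun t => f t - τ.1 t)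

/-! ### Sup norm, averages and the modulus `W₂*` -/

lemma unorm_le {f : ℝ → ℝ} {C : ℝ} (hC : ∀ u, |f u| ≤ C) : unorm f ≤ C := ciSup_le hC

lemma unorm_nonneg (f : ℝ → ℝ) : 0 ≤ unorm f := Real.iSup_nonneg fun _ => abs_nonneg _

lemma abs_le_unorm_of_bound {f : ℝ → ℝ} {C : ℝ} (hC : ∀ u, |f u| ≤ C) (t : ℝ) :
    |f t| ≤ unorm f :=
  le_ciSup (f := fun u => |f u|) ⟨C, by rintro _ ⟨u, rfl⟩; exact hC u⟩ t

lemma abs_le_unorm {f : ℝ → ℝ} (hf : Continuous f) (hp : Function.Periodic f 1) (t : ℝ) :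
    |f t| ≤ unorm f := by
  obtain ⟨C, hC⟩ := (hp.isBounded_of_continuous one_ne_zero hf).exists_norm_le
  exact abs_le_unorm_of_bound (fun u => hC _ ⟨u, rfl⟩) t

/-- The primitive of `f` vanishing at `0`. -/
noncomputable def prim (f : ℝ → ℝ) : ℝ → ℝ := fun x => ∫ v in (0:ℝ)..x, f v

lemma prim_hasDerivAt {f : ℝ → ℝ} (hf : Continuous f) (x : ℝ) : HasDerivAt (prim f) (f x) x :=
  intervalIntegral.integral_hasDerivAt_right (hf.intervalIntegrable _ _)
    (hf.stronglyMeasurableAtFilter _ _) hf.continuousAt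

lemma prim_continuous {f : ℝ → ℝ} (hf : Continuous f) : Continuous (prim f) :=
  continuous_iff_continuousAt.2 fun x => (prim_hasDerivAt hf x).continuousAt

lemma prim_sub {f : ℝ → ℝ} (hf : Continuous f) (a b : ℝ) :
    prim f b - prim f a = ∫ v in a..b, f v :=
  intervalIntegral.integral_interval_sub_left (hf.intervalIntegrable _ _)
    (hf.intervalIntegrable _ _)

/-- `f * χ_u` is the mean of `f` over the interval of length `u` centred at `t`. -/
lemma conv_chi {f : ℝ → ℝ} (hf : Continuous f) {u : ℝ} (hu : 0 < u) (t : ℝ) :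
    conv f (chiPow u 1) t = (prim f (t + u/2) - prim f (t - u/2)) / u := by
  rw [prim_sub hf, intervalIntegral.integral_of_le (by linarith),
    integral_Ioc_eq_integral_Ioo, ← integral_indicator measurableSet_Ioo,
    ← integral_div]
  refine integral_congr_ae (Filter.Eventually.of_forall fun v => ?_)
  by_cases hv : v ∈ Set.Ioo (t - u/2) (t + u/2)
  · have h1 : -u/2 < t - v ∧ t - v < u/2 := ⟨by linarith [hv.2], by linarith [hv.1]⟩
    simp only [chiPow, chi, Set.indicator_of_mem hv, if_pos h1]
    ring
  · have h1 : ¬ (-u/2 < t - v ∧ t - v < u/2) := fun hc =>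
      hv ⟨by linarith [hc.2], by linarith [hc.1]⟩
    simp only [chiPow, chi, Set.indicator_of_notMem hv, if_neg h1]
    simp

lemma abs_conv_le {f : ℝ → ℝ} (hf : Continuous f) (hp : Function.Periodic f 1)
    {u : ℝ} (hu : 0 < u) (t : ℝ) : |conv f (chiPow u 1) t| ≤ unorm f := by
  rw [conv_chi hf hu, prim_sub hf, abs_div, abs_of_pos hu, div_le_iff₀ hu]
  have := intervalIntegral.norm_integral_le_of_norm_le_const (a := t - u/2) (b := t + u/2)
    (f := f) (C := unorm f) (fun x _ => abs_le_unorm hf hp x)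
  rwa [show t + u/2 - (t - u/2) = u by ring, abs_of_pos hu] at this

lemma abs_sub_conv_le {f : ℝ → ℝ} (hf : Continuous f) (hp : Function.Periodic f 1)
    {u : ℝ} (hu : 0 < u) (t : ℝ) : |f t - conv f (chiPow u 1) t| ≤ 2 * unorm f := by
  have := abs_sub (f t) (conv f (chiPow u 1) t)
  linarith [abs_le_unorm hf hp t, abs_conv_le hf hp hu t]

lemma abs_sub_conv_le_W2star {f : ℝ → ℝ} (hf : Continuous f) (hp : Function.Periodic f 1)
    {u h : ℝ} (hu : 0 < u) (huh : u ≤ h) (t : ℝ) :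
    |f t - conv f (chiPow u 1) t| ≤ W2star f h 1 := by
  have h1 : W2 f u 1 ≤ W2star f h 1 :=
    le_ciSup (f := fun v : Set.Ioc (0:ℝ) h => W2 f v.1 1)
      ⟨2 * unorm f, by
        rintro _ ⟨v, rfl⟩; exact unorm_le (abs_sub_conv_le hf hp v.2.1)⟩ ⟨u, hu, huh⟩
  exact (abs_le_unorm_of_bound (abs_sub_conv_le hf hp hu) t).trans h1

/-! ### Taylor estimate for averages -/

/-- A mean value inequality: a bound on the derivative for positive arguments may be integrated
from `0`. -/
lemma abs_le_of_deriv_le {p p' B B' : ℝ → ℝ} (hp : ∀ x, HasDerivAt p (p' x) x)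
    (hB : ∀ x, HasDerivAt B (B' x) x) (hp0 : p 0 = 0) (hB0 : B 0 = 0)
    (hle : ∀ x, 0 ≤ x → |p' x| ≤ B' x) {x : ℝ} (hx : 0 ≤ x) : |p x| ≤ B x :=
  image_norm_le_of_norm_deriv_right_le_deriv_boundary (a := 0) (b := x)
    (fun y _ => (hp y).continuousAt.continuousWithinAt)
    (fun y _ => (hp y).hasDerivWithinAt) (by simp [hp0, hB0])
    hB (fun y hy => hle y hy.1) ⟨hx, le_rfl⟩

lemma hasDerivAt_comp_add {q : ℝ → ℝ} {q' t x : ℝ} (hq : HasDerivAt q q' (t + x)) :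
    HasDerivAt (fun s => q (t + s)) q' x := hq.comp_const_add t x

lemma hasDerivAt_comp_sub {q : ℝ → ℝ} {q' t x : ℝ} (hq : HasDerivAt q q' (t - x)) :
    HasDerivAt (fun s => q (t - s)) (-q') x := hq.comp_const_sub t x

/-- `‖g - g * χ_u‖ ≤ (u²/24) ‖g''‖`, by integrating the bound on `g''` three times. -/
lemma abs_sub_avg_le {g g1 g2 : ℝ → ℝ} {N : ℝ} (h1 : ∀ x, HasDerivAt g (g1 x) x)
    (h2 : ∀ x, HasDerivAt g1 (g2 x) x) (hN : ∀ x, |g2 x| ≤ N) {u : ℝ} (hu : 0 < u) (t : ℝ) :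
    |g t - conv g (chiPow u 1) t| ≤ u^2 / 24 * N := by
  have hgc : Continuous g := continuous_iff_continuousAt.2 fun x => (h1 x).continuousAt
  have s1 : ∀ x, 0 ≤ x → |g1 (t + x) - g1 (t - x)| ≤ 2 * N * x := fun x hx => by
    refine abs_le_of_deriv_le (p := fun x => g1 (t + x) - g1 (t - x)) (B := fun x => 2 * N * x)
      (fun x => (hasDerivAt_comp_add (h2 _)).sub (hasDerivAt_comp_sub (h2 _)))
      (fun x => (hasDerivAt_id x).const_mul (2 * N)) (by simp) (by simp) (fun x _ => ?_) hx
    have := abs_sub (g2 (t + x)) (-g2 (t - x))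
    rw [abs_neg] at this
    linarith [hN (t + x), hN (t - x)]
  have s2 : ∀ x, 0 ≤ x → |g (t + x) + g (t - x) - 2 * g t| ≤ N * x^2 := fun x hx => by
    refine abs_le_of_deriv_le (p := fun x => g (t + x) + g (t - x) - 2 * g t)
      (B := fun x => N * x^2)
      (fun x => ((hasDerivAt_comp_add (h1 _)).add (hasDerivAt_comp_sub (h1 _))).sub_const _)
      (fun x => (hasDerivAt_pow 2 x).const_mul N) (by simp; ring) (by simp) (fun x hx => ?_) hx
    have := s1 x hx
    rw [← sub_eq_add_neg]
    refine this.trans (le_of_eq ?_)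
    norm_num; ring
  have s3 : ∀ x, 0 ≤ x → |prim g (t + x) - prim g (t - x) - 2 * g t * x| ≤ N / 3 * x^3 :=
    fun x hx => by
      refine abs_le_of_deriv_le (p := fun x => prim g (t + x) - prim g (t - x) - 2 * g t * x)
        (B := fun x => N / 3 * x^3)
        (fun x => ((hasDerivAt_comp_add (prim_hasDerivAt hgc _)).sub
          (hasDerivAt_comp_sub (prim_hasDerivAt hgc _))).sub
            ((hasDerivAt_id x).const_mul (2 * g t)))
        (fun x => (hasDerivAt_pow 3 x).const_mul (N / 3)) (by simp) (by simp)
        (fun x hx => ?_) hx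
      have := s2 x hx
      rw [sub_neg_eq_add, mul_one]
      refine this.trans (le_of_eq ?_)
      norm_num; ring
  have s4 := s3 (u/2) (by linarith)
  rw [conv_chi hgc hu, abs_sub_comm,
    show (prim g (t + u/2) - prim g (t - u/2)) / u - g t
      = (prim g (t + u/2) - prim g (t - u/2) - 2 * g t * (u/2)) / u by field_simp,
    abs_div, abs_of_pos hu, div_le_iff₀ hu]
  refine s4.trans (le_of_eq ?_)
  ring

/-! ### The smooth competitor -/

/-- The convolution of `f` with the normalized kernel `(24/h²) φ_h`,
`φ_h(x) = (h/2 - |x|)² / (2h)` on `|x| ≤ h/2`, written as a weighted mean over `r` of the averages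
`f * χ_{2r}`: the difference of primitives is `2r (f * χ_{2r})(t)`. -/
noncomputable def steklov (f : ℝ → ℝ) (h : ℝ) : ℝ → ℝ := fun t =>
  24 / h^3 * ∫ r in (0:ℝ)..(h/2), (h/2 - r) * (prim f (t + r) - prim f (t - r))

lemma steklov_periodic {f : ℝ → ℝ} (hf : Continuous f) (hp : Function.Periodic f 1) (h : ℝ) :
    Function.Periodic (steklov f h) 1 := by
  intro t
  unfold steklov
  congr 1
  refine intervalIntegral.integral_congr fun r _ => ?_
  rw [prim_sub hf, prim_sub hf, show t + 1 + r = t + r + 1 by ring,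
    show t + 1 - r = t - r + 1 by ring, ← intervalIntegral.integral_comp_add_right]
  simp only [hp _]

/-- Integration by parts turns `steklov` into a closed form that can be differentiated. -/
lemma steklov_eq {f : ℝ → ℝ} (hf : Continuous f) (h t : ℝ) :
    steklov f h t = 24 / h^3 * (prim (prim (prim f)) (t + h/2) - prim (prim (prim f)) (t - h/2)
      - h * prim (prim f) t) := by
  have hF := prim_continuous hf
  have hG := prim_continuous hF
  unfold steklov
  congr 1
  have key := intervalIntegral.integral_eq_sub_of_hasDerivAt (a := 0) (b := h/2)
    (f := fun r => (h/2 - r) * (prim (prim f) (t + r) + prim (prim f) (t - r))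
      + (prim (prim (prim f)) (t + r) - prim (prim (prim f)) (t - r)))
    (f' := fun r => (h/2 - r) * (prim f (t + r) - prim f (t - r)))
    (fun r _ => by
      have d1 := ((hasDerivAt_id r).const_sub (h/2)).mul
        ((hasDerivAt_comp_add (prim_hasDerivAt hF (t + r))).add
          (hasDerivAt_comp_sub (prim_hasDerivAt hF (t - r))))
      have d2 := (hasDerivAt_comp_add (prim_hasDerivAt hG (t + r))).sub
          (hasDerivAt_comp_sub (prim_hasDerivAt hG (t - r)))
      refine (d1.add d2).congr_deriv ?_
      simp only [id, Pi.add_apply]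
      ring)
    (Continuous.intervalIntegrable (by fun_prop) _ _)
  rw [key]
  simp
  ring

lemma steklov_hasDerivAt {f : ℝ → ℝ} (hf : Continuous f) (h t : ℝ) :
    HasDerivAt (steklov f h) (24 / h^3 * (prim (prim f) (t + h/2) - prim (prim f) (t - h/2)
      - h * prim f t)) t := by
  have hF := prim_continuous hf
  have hG := prim_continuous hF
  rw [show steklov f h = _ from funext (steklov_eq hf h)]
  exact ((((prim_hasDerivAt hG _).comp_add_const t (h/2)).sub
    ((prim_hasDerivAt hG _).comp_sub_const t (h/2))).sub
    ((prim_hasDerivAt hF t).const_mul h)).const_mul _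

lemma steklov_hasDerivAt_deriv {f : ℝ → ℝ} (hf : Continuous f) (h t : ℝ) :
    HasDerivAt (deriv (steklov f h)) (24 / h^3 * (prim f (t + h/2) - prim f (t - h/2)
      - h * f t)) t := by
  have hF := prim_continuous hf
  rw [funext fun x => (steklov_hasDerivAt hf h x).deriv]
  exact ((((prim_hasDerivAt hF _).comp_add_const t (h/2)).sub
    ((prim_hasDerivAt hF _).comp_sub_const t (h/2))).sub
    ((prim_hasDerivAt hf t).const_mul h)).const_mul _

lemma steklov_contDiff {f : ℝ → ℝ} (hf : Continuous f) (h : ℝ) :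
    ContDiff ℝ 2 (steklov f h) := by
  have hF := prim_continuous hf
  rw [show (2 : WithTop ℕ∞) = 1 + 1 by norm_num, contDiff_succ_iff_deriv]
  refine ⟨fun x => (steklov_hasDerivAt hf h x).differentiableAt, by simp, ?_⟩
  rw [contDiff_one_iff_deriv]
  refine ⟨fun x => (steklov_hasDerivAt_deriv hf h x).differentiableAt, ?_⟩
  rw [funext fun x => (steklov_hasDerivAt_deriv hf h x).deriv]
  fun_prop

/-- `(h²/24) g'' = f * χ_h - f` for `g = steklov f h`. -/
lemma steklov_iteratedDeriv {f : ℝ → ℝ} (hf : Continuous f) {h : ℝ} (hh : 0 < h) (t : ℝ) :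
    iteratedDeriv 2 (steklov f h) t = -(24 / h^2 * (f t - conv f (chiPow h 1) t)) := by
  rw [iteratedDeriv_succ, iteratedDeriv_one, (steklov_hasDerivAt_deriv hf h t).deriv,
    conv_chi hf hh]
  field_simp
  ring

lemma abs_sub_steklov_le {f : ℝ → ℝ} (hf : Continuous f) (hp : Function.Periodic f 1)
    {h : ℝ} (hh : 0 < h) (t : ℝ) : |f t - steklov f h t| ≤ W2star f h 1 := by
  have hF := prim_continuous hf
  set W := W2star f h 1 with hW
  have poly : ∀ c : ℝ, ∫ r in (0:ℝ)..(h/2), (h/2 - r) * (c * r) = c * h^3 / 48 := fun c => by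
    have := intervalIntegral.integral_eq_sub_of_hasDerivAt (a := 0) (b := h/2)
      (f := fun r => c * (h/4 * r^2 - r^3/3)) (f' := fun r => (h/2 - r) * (c * r))
      (fun r _ => by
        refine ((((hasDerivAt_pow 2 r).const_mul (h/4)).sub
          ((hasDerivAt_pow 3 r).div_const 3)).const_mul c).congr_deriv ?_
        norm_num; ring)
      (Continuous.intervalIntegrable (by fun_prop) _ _)
    rw [this]; ring
  have hbound : ∀ r ∈ Set.Ioc 0 (h/2),
      ‖(h/2 - r) * (prim f (t + r) - prim f (t - r)) - (h/2 - r) * (2 * f t * r)‖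
        ≤ (h/2 - r) * (2 * W * r) := fun r hr => by
    have hr0 : 0 < r := hr.1
    have := abs_sub_conv_le_W2star hf hp (u := 2 * r) (h := h) (by linarith)
      (by linarith [hr.2]) t
    rw [conv_chi hf (by linarith), abs_sub_comm, show 2 * r / 2 = r by ring] at this
    rw [← mul_sub, norm_mul, Real.norm_of_nonneg (by linarith [hr.2]), Real.norm_eq_abs,
      show prim f (t + r) - prim f (t - r) - 2 * f t * r
        = (2 * r) * ((prim f (t + r) - prim f (t - r)) / (2 * r) - f t) by field_simp,
      abs_mul, abs_of_pos (by linarith : 0 < 2 * r)]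
    refine mul_le_mul_of_nonneg_left ?_ (by linarith [hr.2])
    nlinarith
  have hint := intervalIntegral.norm_integral_le_of_norm_le (μ := volume) (a := 0) (b := h/2)
    (by linarith) (Filter.Eventually.of_forall hbound)
    (Continuous.intervalIntegrable (by fun_prop) _ _)
  rw [intervalIntegral.integral_sub (Continuous.intervalIntegrable (by fun_prop) _ _)
    (Continuous.intervalIntegrable (by fun_prop) _ _), poly, poly, Real.norm_eq_abs] at hint
  have h3 : 0 < h^3 := by positivity
  have e : f t - steklov f h t = -(24 / h^3 *
      ((∫ r in (0:ℝ)..(h/2), (h/2 - r) * (prim f (t + r) - prim f (t - r)))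
        - 2 * f t * h^3 / 48)) := by
    unfold steklov
    field_simp
    ring
  rw [e, abs_neg, abs_mul, abs_of_pos (by positivity)]
  calc _ ≤ 24 / h^3 * (2 * W * h^3 / 48) := by gcongr
    _ = W := by field_simp; ring

/-! ### Comparison with the K-functional -/

/-- Theorem 1, second part: `(2/5)·K₂(f, h/(4√3)) ≤ W₂*(f, χ_h) ≤ 2·K₂(f, h/(4√3))`. -/
theorem stmt1 (f : ℝ → ℝ) (hf : Continuous f) (hper : Function.Periodic f 1)
    (h : ℝ) (hh : 0 < h) :
    (2/5) * K2 f (h / (4 * Real.sqrt 3)) ≤ W2star f h 1 ∧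
    W2star f h 1 ≤ 2 * K2 f (h / (4 * Real.sqrt 3)) := by
  have hsq : (h / (4 * Real.sqrt 3))^2 = h^2 / 48 := by
    rw [div_pow, mul_pow, Real.sq_sqrt (by norm_num)]; norm_num
  have hWnn : 0 ≤ W2star f h 1 :=
    (abs_nonneg _).trans (abs_sub_conv_le_W2star hf hper hh le_rfl 0)
  constructor
  · have hK : K2 f (h / (4 * Real.sqrt 3)) ≤ unorm (fun t => f t - steklov f h t)
        + (h / (4 * Real.sqrt 3))^2 * unorm (iteratedDeriv 2 (steklov f h)) :=
      ciInf_le (f := fun g : {g : ℝ → ℝ // ContDiff ℝ 2 g ∧ Function.Periodic g 1} =>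
          unorm (fun t => f t - g.1 t)
            + (h / (4 * Real.sqrt 3))^2 * unorm (iteratedDeriv 2 g.1))
        ⟨0, by
          rintro _ ⟨g, rfl⟩
          exact add_nonneg (unorm_nonneg _) (mul_nonneg (sq_nonneg _) (unorm_nonneg _))⟩
        ⟨steklov f h, steklov_contDiff hf h, steklov_periodic hf hper h⟩
    have k1 : unorm (fun t => f t - steklov f h t) ≤ W2star f h 1 :=
      unorm_le (abs_sub_steklov_le hf hper hh)
    have k2 : unorm (iteratedDeriv 2 (steklov f h)) ≤ 24 / h^2 * W2star f h 1 :=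
      unorm_le fun t => by
        rw [steklov_iteratedDeriv hf hh, abs_neg, abs_mul, abs_of_pos (by positivity)]
        gcongr
        exact abs_sub_conv_le_W2star hf hper hh le_rfl t
    have k3 : h^2 / 48 * unorm (iteratedDeriv 2 (steklov f h)) ≤ W2star f h 1 / 2 := by
      calc _ ≤ h^2 / 48 * (24 / h^2 * W2star f h 1) := by gcongr
        _ = W2star f h 1 / 2 := by field_simp; ring
    rw [hsq] at hK
    linarith
  · have : Nonempty {g : ℝ → ℝ // ContDiff ℝ 2 g ∧ Function.Periodic g 1} :=
      ⟨⟨fun _ => 0, contDiff_const, fun _ => rfl⟩⟩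
    have : Nonempty (Set.Ioc (0:ℝ) h) := ⟨⟨h, hh, le_rfl⟩⟩
    suffices hs : W2star f h 1 / 2 ≤ K2 f (h / (4 * Real.sqrt 3)) by linarith
    refine le_ciInf fun ⟨g, hg, hgp⟩ => ?_
    simp only
    rw [hsq]
    suffices hs : W2star f h 1 ≤ 2 * unorm (fun t => f t - g t)
        + h^2 / 24 * unorm (iteratedDeriv 2 g) by linarith
    refine ciSup_le fun ⟨u, hu0, huh⟩ => unorm_le fun t => ?_
    have hgc := hg.continuous
    have d1 : ∀ x, HasDerivAt g (deriv g x) x := fun x =>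
      ((hg.differentiable (by norm_num)) x).hasDerivAt
    have d2 : ∀ x, HasDerivAt (deriv g) (iteratedDeriv 2 g x) x := fun x => by
      have := (hg.differentiable_iteratedDeriv 1 (by norm_num)) x
      rw [iteratedDeriv_one] at this
      rw [iteratedDeriv_succ, iteratedDeriv_one]
      exact this.hasDerivAt
    have hd2p : Function.Periodic (iteratedDeriv 2 g) 1 := fun x => by
      have := congrFun (iteratedDeriv_comp_add_const 2 g 1) x
      rw [← this, funext hgp]
    have hd2c : Continuous (iteratedDeriv 2 g) := hg.continuous_iteratedDeriv 2 le_rfl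
    have b1 := abs_sub_avg_le d1 d2 (abs_le_unorm hd2c hd2p) hu0 t
    have hpc : Continuous (fun t => f t - g t) := hf.sub hgc
    have b2 := abs_sub_conv_le hpc (hper.sub hgp) hu0 t
    have hlin : f t - conv f (chiPow u 1) t
        = ((f t - g t) - conv (fun t => f t - g t) (chiPow u 1) t)
          + (g t - conv g (chiPow u 1) t) := by
      rw [conv_chi hf hu0, conv_chi hgc hu0, conv_chi hpc hu0, prim_sub hf, prim_sub hgc,
        prim_sub hpc, intervalIntegral.integral_sub (hf.intervalIntegrable _ _)
          (hgc.intervalIntegrable _ _)]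
      ring
    have hmono : u^2 / 24 * unorm (iteratedDeriv 2 g) ≤ h^2 / 24 * unorm (iteratedDeriv 2 g) := by
      have := unorm_nonneg (iteratedDeriv 2 g)
      gcongr
    simp only
    rw [hlin]
    exact (abs_add_le _ _).trans (by linarith)
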